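/- arXiv:2307.02517 — 3 statements merged into one kernel-verified Lean document; each statement's English description precedes it below -/
import Mathlib

section
/- Let G be a finite simple connected graph, m ≥ 2 an integer, q ∈ V(G), and {w1, w2} an edge of G. Let p = q^{1/m}, and let v be the vertex of G^{1/m} on the thread replacing {w1, w2} at distance x from w1^{1/m}, where 0 < x < m/2. Then the nearest integer to dist_{G^{1/m}}(p, v) / m equals dist_G(q, w1) (the value dist_{G^{1/m}}(p, v) mod m is never exactly m/2, so the nearest integer is well defined). -/
open SimpleGraph

/-- The vertex type of the `m`-subdivision of a simple graph `G`:
branch vertices (`Sum.inl`) together with, for each edge (oriented from its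
smaller to its larger endpoint) and each `i : Fin (m-1)`, the internal vertex
of the corresponding thread at distance `i+1` from the smaller endpoint. -/
abbrev SubVert (V : Type*) [LinearOrder V] (G : SimpleGraph V) (m : ℕ) : Type _ :=
  V ⊕ ({e : V × V // G.Adj e.1 e.2 ∧ e.1 < e.2} × Fin (m - 1))

/-- Basic adjacency generating relation for the `m`-subdivision. -/
def subPre {V : Type*} [LinearOrder V] (G : SimpleGraph V) (m : ℕ) :
    SubVert V G m → SubVert V G m → Prop
  | Sum.inl u, Sum.inl v => m = 1 ∧ G.Adj u v
  | Sum.inl u, Sum.inr ei => (u = ei.1.1.1 ∧ (ei.2 : ℕ) = 0) ∨ (u = ei.1.1.2 ∧ (ei.2 : ℕ) + 2 = m)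
  | Sum.inr ei, Sum.inr ej => ei.1 = ej.1 ∧ (ei.2 : ℕ) + 1 = (ej.2 : ℕ)
  | Sum.inr _, Sum.inl _ => False

/-- The `m`-subdivision `G^{1/m}` of `G`: every edge of `G` is replaced by a
path (thread) of length `m`. -/
def Subdiv {V : Type*} [LinearOrder V] (G : SimpleGraph V) (m : ℕ) :
    SimpleGraph (SubVert V G m) :=
  SimpleGraph.fromRel (subPre G m)

/-- The vertex of `G^{1/m}` lying on the thread replacing the edge `{w₁, w₂}`
at distance `x` along the thread from `w₁` (for `0 ≤ x ≤ m`). -/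
def threadVert {V : Type*} [LinearOrder V] (G : SimpleGraph V) (m : ℕ) (w₁ w₂ : V)
    (h : G.Adj w₁ w₂) (x : ℕ) : SubVert V G m :=
  if hx0 : x = 0 then Sum.inl w₁
  else if hxm : m ≤ x then Sum.inl w₂
  else if hlt : w₁ < w₂ then
    Sum.inr (⟨(w₁, w₂), h, hlt⟩, ⟨x - 1, by omega⟩)
  else
    Sum.inr (⟨(w₂, w₁), h.symm, lt_of_le_of_ne (not_lt.mp hlt) h.ne'⟩, ⟨m - x - 1, by omega⟩)

/-- A vertex of `G^{1/m}` lies on the thread replacing the edge `{w₁, w₂}`. -/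
def OnThread {V : Type*} [LinearOrder V] (G : SimpleGraph V) (m : ℕ) (w₁ w₂ : V)
    (h : G.Adj w₁ w₂) (v : SubVert V G m) : Prop :=
  ∃ x ≤ m, v = threadVert G m w₁ w₂ h x


lemma thread_adj {V : Type*} [LinearOrder V] (G : SimpleGraph V) (m : ℕ) (hm : 2 ≤ m) (u v : V)
    (h : G.Adj u v) (y : ℕ) (hy : y < m) :
    (Subdiv G m).Adj (threadVert G m u v h y) (threadVert G m u v h (y + 1)) := by
  have hne := h.ne
  unfold threadVert Subdiv
  rw [SimpleGraph.fromRel_adj]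
  split_ifs <;> simp [subPre] <;> (try omega) <;> grind

lemma thread_walk {V : Type*} [LinearOrder V] (G : SimpleGraph V) (m : ℕ) (hm : 2 ≤ m) (u v : V)
    (h : G.Adj u v) (y : ℕ) (hy : y ≤ m) :
    ∃ p : (Subdiv G m).Walk (Sum.inl u) (threadVert G m u v h y), p.length = y := by
  induction y with
  | zero =>
    have e : threadVert G m u v h 0 = Sum.inl u := by simp [threadVert]
    rw [e]
    exact ⟨Walk.nil, rfl⟩
  | succ y ih =>
    obtain ⟨p, hp⟩ := ih (by omega)
    exact ⟨p.concat (thread_adj G m hm u v h y (by omega)), by simp [hp]⟩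

lemma branch_walk {V : Type*} [LinearOrder V] (G : SimpleGraph V) (m : ℕ) (hm : 2 ≤ m) (u v : V)
    (w : G.Walk u v) :
    ∃ p : (Subdiv G m).Walk (Sum.inl u) (Sum.inl v), p.length = m * w.length := by
  induction w with
  | nil => exact ⟨Walk.nil, by simp⟩
  | @cons a b c h w ih =>
    obtain ⟨p, hp⟩ := ih
    have e : threadVert G m a b h m = Sum.inl b := by
      unfold threadVert
      rw [dif_neg (by omega), dif_pos le_rfl]
    have hr := thread_walk G m hm a b h m le_rfl
    rw [e] at hr
    obtain ⟨r, hr⟩ := hr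
    exact ⟨r.append p, by simp [hp, hr]; ring⟩

lemma thread_symm {V : Type*} [LinearOrder V] (G : SimpleGraph V) (m : ℕ) (u v : V)
    (h : G.Adj u v) (x : ℕ) (hx0 : 0 < x) (hx : x < m) :
    threadVert G m u v h x = threadVert G m v u h.symm (m - x) := by
  have hne := h.ne
  unfold threadVert
  rw [dif_neg (show ¬ x = 0 by omega), dif_neg (show ¬ m ≤ x by omega),
    dif_neg (show ¬ m - x = 0 by omega), dif_neg (show ¬ m ≤ m - x by omega)]
  rcases lt_or_gt_of_ne hne with hl | hl
  · rw [dif_pos hl, dif_neg (not_lt.mpr hl.le)]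
    congr 3
    omega
  · rw [dif_pos hl, dif_neg (not_lt.mpr hl.le)]

/-- Explicit distance from the branch vertex `q`. -/
noncomputable def potl {V : Type*} [LinearOrder V] (G : SimpleGraph V) (m : ℕ) (q : V) :
    SubVert V G m → ℕ
  | Sum.inl u => m * G.dist q u
  | Sum.inr ei => min (m * G.dist q ei.1.1.1 + (ei.2 + 1))
      (m * G.dist q ei.1.1.2 + (m - (ei.2 + 1)))

lemma dist_step {V : Type*} (G : SimpleGraph V) (hG : G.Connected) (m : ℕ) (q u v : V)
    (h : G.Adj u v) : m * G.dist q v ≤ m * G.dist q u + m := by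
  have h1 := hG.dist_triangle (u := q) (v := u) (w := v)
  rw [SimpleGraph.dist_eq_one_iff_adj.mpr h] at h1
  calc _ ≤ m * (G.dist q u + 1) := Nat.mul_le_mul_left _ h1
    _ = _ := by ring

lemma potl_pre {V : Type*} [LinearOrder V] (G : SimpleGraph V) (hG : G.Connected) (m : ℕ)
    (hm : 2 ≤ m) (q : V) (a b : SubVert V G m) (h : subPre G m a b) :
    potl G m q b ≤ potl G m q a + 1 ∧ potl G m q a ≤ potl G m q b + 1 := by
  rcases a with u | ⟨⟨⟨e1, e2⟩, he, hl⟩, i⟩ <;> rcases b with v | ⟨⟨⟨f1, f2⟩, hf, hl'⟩, j⟩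
  · simp [subPre] at h; omega
  · have h1 := dist_step G hG m q _ _ hf
    have h2 := dist_step G hG m q _ _ hf.symm
    have := j.2
    simp only [subPre] at h
    dsimp only at h1 h2 h
    simp only [potl]
    rcases h with ⟨rfl, h⟩ | ⟨rfl, h⟩ <;> omega
  · simp [subPre] at h
  · simp only [subPre, Subtype.mk.injEq, Prod.mk.injEq] at h
    obtain ⟨⟨rfl, rfl⟩, h⟩ := h
    have := j.2
    simp only [potl]
    omega

lemma potl_walk {V : Type*} [LinearOrder V] (G : SimpleGraph V) (hG : G.Connected) (m : ℕ)
    (hm : 2 ≤ m) (q : V) (a b : SubVert V G m) (p : (Subdiv G m).Walk a b) :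
    potl G m q b ≤ potl G m q a + p.length := by
  induction p with
  | nil => simp
  | cons h p ih =>
    rw [Walk.length_cons]
    unfold Subdiv at h
    rw [SimpleGraph.fromRel_adj] at h
    rcases h.2 with h | h
    · have := potl_pre G hG m hm q _ _ h; omega
    · have := potl_pre G hG m hm q _ _ h; omega

lemma potl_thread {V : Type*} [LinearOrder V] (G : SimpleGraph V) (m : ℕ) (q u v : V)
    (h : G.Adj u v) (x : ℕ) (hx0 : 0 < x) (hx : x < m) :
    potl G m q (threadVert G m u v h x) =
      min (m * G.dist q u + x) (m * G.dist q v + (m - x)) := by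
  unfold threadVert
  rw [dif_neg (by omega), dif_neg (by omega)]
  split_ifs <;> simp only [potl] <;> omega

lemma dist_thread_le {V : Type*} [LinearOrder V] (G : SimpleGraph V) (hG : G.Connected) (m : ℕ)
    (hm : 2 ≤ m) (q u v : V) (h : G.Adj u v) (x : ℕ) (hx : x ≤ m) :
    ∃ p : (Subdiv G m).Walk (Sum.inl q) (threadVert G m u v h x),
      p.length = m * G.dist q u + x := by
  obtain ⟨w, hw⟩ := hG.exists_walk_length_eq_dist q u
  obtain ⟨p, hp⟩ := branch_walk G m hm q u w
  obtain ⟨r, hr⟩ := thread_walk G m hm u v h x hx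
  exact ⟨p.append r, by simp [hp, hr, hw]⟩

lemma dist_thread {V : Type*} [LinearOrder V] (G : SimpleGraph V) (hG : G.Connected) (m : ℕ)
    (hm : 2 ≤ m) (q u v : V) (h : G.Adj u v) (x : ℕ) (hx0 : 0 < x) (hx : x < m) :
    (Subdiv G m).dist (Sum.inl q) (threadVert G m u v h x) =
      min (m * G.dist q u + x) (m * G.dist q v + (m - x)) := by
  obtain ⟨p, hp⟩ := dist_thread_le G hG m hm q u v h x hx.le
  have hr := dist_thread_le G hG m hm q v u h.symm (m - x) (by omega)
  rw [← thread_symm G m u v h x hx0 hx] at hr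
  obtain ⟨r, hr⟩ := hr
  obtain ⟨s, hs⟩ := p.reachable.exists_walk_length_eq_dist
  have h1 := potl_walk G hG m hm q _ _ s
  rw [potl_thread G m q u v h x hx0 hx] at h1
  have h0 : potl G m q (Sum.inl q) = 0 := by simp [potl]
  have h2 := SimpleGraph.dist_le p
  have h3 := SimpleGraph.dist_le r
  omega

/-- For `p = q^{1/m}` and `v` at distance `x` from `w₁` along the thread of the
edge `{w₁, w₂}` with `0 < x < m/2`: `dist(p,v) mod m` is never exactly `m/2`,
and the nearest integer to `dist(p,v) / m` equals `dist_G(q, w₁)`. -/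
theorem subdiv_dist_round {n m : ℕ} (G : SimpleGraph (Fin n))
    (hG : G.Connected) (hm : 2 ≤ m) (q w₁ w₂ : Fin n) (hw : G.Adj w₁ w₂)
    (x : ℕ) (hx0 : 0 < x) (hxm : 2 * x < m) :
    2 * ((Subdiv G m).dist (Sum.inl q) (threadVert G m w₁ w₂ hw x) % m) ≠ m ∧
    round (((Subdiv G m).dist (Sum.inl q) (threadVert G m w₁ w₂ hw x) : ℚ) / (m : ℚ)) =
      (G.dist q w₁ : ℤ) := by
  have hd := dist_thread G hG m hm q w₁ w₂ hw x hx0 (by omega)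
  have key : (Subdiv G m).dist (Sum.inl q) (threadVert G m w₁ w₂ hw x) = m * G.dist q w₁ + x ∨
      (Subdiv G m).dist (Sum.inl q) (threadVert G m w₁ w₂ hw x) + x = m * G.dist q w₁ := by
    have h1 := dist_step G hG m q _ _ hw.symm
    rcases Nat.lt_or_ge (G.dist q w₂) (G.dist q w₁) with hlt | hge
    · right
      have h2 : m * (G.dist q w₂ + 1) ≤ m * G.dist q w₁ := Nat.mul_le_mul_left _ hlt
      rw [mul_add] at h2
      omega
    · left
      have h2 := Nat.mul_le_mul_left m hge
      omega
  generalize (Subdiv G m).dist (Sum.inl q) (threadVert G m w₁ w₂ hw x) = D at key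
  generalize G.dist q w₁ = d at key
  have hmq : (0 : ℚ) < m := by exact_mod_cast (by omega : 0 < m)
  have hx1 : (0 : ℚ) < x := by exact_mod_cast hx0
  have hx2 : 2 * (x : ℚ) < m := by exact_mod_cast hxm
  constructor
  · rcases key with h | h
    · rw [h, Nat.mul_add_mod, Nat.mod_eq_of_lt (by omega)]
      omega
    · intro h2
      have h3 := Nat.div_add_mod D m
      have h4 : m * d = m * (D / m) + (D % m + x) := by omega
      have h5 : (m * d) % m = D % m + x := by
        rw [h4, Nat.mul_add_mod, Nat.mod_eq_of_lt (by omega)]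
      rw [Nat.mul_mod_right] at h5
      omega
  · rw [round_eq, Int.floor_eq_iff]
    rcases key with h | h
    · have h' : (D : ℚ) = m * d + x := by exact_mod_cast h
      have e : (D : ℚ) / m = d + x / m := by rw [h']; field_simp
      have b1 : 0 < (x : ℚ) / m := by positivity
      have b2 : (x : ℚ) / m < 1 / 2 := by rw [div_lt_iff₀ hmq]; linarith
      rw [e]
      push_cast
      constructor <;> linarith
    · have h' : (D : ℚ) = m * d - x := by rw [eq_sub_iff_add_eq]; exact_mod_cast h
      have e : (D : ℚ) / m = d - x / m := by rw [h']; field_simp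
      have b1 : 0 < (x : ℚ) / m := by positivity
      have b2 : (x : ℚ) / m < 1 / 2 := by rw [div_lt_iff₀ hmq]; linarith
      rw [e]
      push_cast
      constructor <;> linarith
end

section
/- Let G be a finite simple connected graph, m ≥ 2 an integer, and b a branch vertex of G^{1/m}. Let {w1, w2} be an edge of G and let v be the vertex on the thread replacing {w1, w2} at distance x from w1^{1/m}, where 0 ≤ x ≤ m. Then dist_{G^{1/m}}(b, v) mod m ∈ { x mod m, (m − x) mod m }. -/
open SimpleGraph

/-- Explicit formula for the distance to the branch vertex `b`. -/
noncomputable def subF {n : ℕ} (G : SimpleGraph (Fin n)) (m : ℕ) (b : Fin n) :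
    SubVert (Fin n) G m → ℕ
  | Sum.inl u => m * G.dist b u
  | Sum.inr ei => min (m * G.dist b ei.1.1.1 + ((ei.2 : ℕ) + 1))
      (m * G.dist b ei.1.1.2 + (m - ((ei.2 : ℕ) + 1)))

lemma mul_dist_le {n : ℕ} (G : SimpleGraph (Fin n)) (hG : G.Connected) (m : ℕ) (b u v : Fin n)
    (h : G.Adj u v) : m * G.dist b v ≤ m * G.dist b u + m := by
  have h1 : G.dist b v ≤ G.dist b u + 1 := by
    have := hG.dist_triangle (u := b) (v := u) (w := v)
    rwa [SimpleGraph.dist_eq_one_iff_adj.mpr h] at this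
  calc m * G.dist b v ≤ m * (G.dist b u + 1) := Nat.mul_le_mul_left _ h1
    _ = _ := by ring

lemma subF_pre {n m : ℕ} (G : SimpleGraph (Fin n)) (hG : G.Connected) (hm : 2 ≤ m) (b : Fin n)
    (s t : SubVert (Fin n) G m) (h : subPre G m s t) :
    subF G m b s ≤ subF G m b t + 1 ∧ subF G m b t ≤ subF G m b s + 1 := by
  rcases s with u | ⟨⟨⟨e1, e2⟩, he, hlt⟩, i, hi⟩ <;>
    rcases t with v | ⟨⟨⟨f1, f2⟩, hf, hlt'⟩, j, hj⟩
  · simp only [subPre] at h; omega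
  · have h1 := mul_dist_le G hG m b _ _ hf
    have h2 := mul_dist_le G hG m b _ _ hf.symm
    simp only [subPre, subF] at h h1 h2 ⊢
    rcases h with ⟨rfl, h⟩ | ⟨rfl, h⟩ <;> omega
  · simp [subPre] at h
  · simp only [subPre, subF, Subtype.mk.injEq, Prod.mk.injEq] at h ⊢
    obtain ⟨⟨rfl, rfl⟩, h⟩ := h
    omega

lemma subF_walk {n m : ℕ} (G : SimpleGraph (Fin n)) (hG : G.Connected) (hm : 2 ≤ m) (b : Fin n)
    {s t : SubVert (Fin n) G m} (p : (Subdiv G m).Walk s t) :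
    subF G m b t ≤ subF G m b s + p.length := by
  induction p with
  | nil => simp
  | cons h p ih =>
    have h' := h
    simp only [Subdiv, SimpleGraph.fromRel_adj] at h'
    rw [SimpleGraph.Walk.length_cons]
    rcases h'.2 with h1 | h1 <;> have := subF_pre G hG hm b _ _ h1 <;> omega

lemma thread_adj_s10 {n m : ℕ} (G : SimpleGraph (Fin n)) (hm : 2 ≤ m)
    (w₁ w₂ : Fin n) (hw : G.Adj w₁ w₂) (x : ℕ) (hx : x < m) :
    (Subdiv G m).Adj (threadVert G m w₁ w₂ hw x) (threadVert G m w₁ w₂ hw (x + 1)) := by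
  have hne := hw.ne
  simp only [Subdiv, SimpleGraph.fromRel_adj, threadVert]
  split_ifs <;> first
    | omega
    | (simp [subPre]; omega)
    | contradiction

lemma thread_symm_s10 {n m : ℕ} (G : SimpleGraph (Fin n)) (hm : 2 ≤ m)
    (w₁ w₂ : Fin n) (hw : G.Adj w₁ w₂) (x : ℕ) (hx : x ≤ m) :
    threadVert G m w₁ w₂ hw x = threadVert G m w₂ w₁ hw.symm (m - x) := by
  have hne := hw.ne
  simp only [threadVert]
  split_ifs <;> first
    | omega
    | rfl
    | (simp; omega)

lemma thread_walk_s10 {n m : ℕ} (G : SimpleGraph (Fin n)) (hm : 2 ≤ m)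
    (w₁ w₂ : Fin n) (hw : G.Adj w₁ w₂) (x : ℕ) (hx : x ≤ m) :
    ∃ p : (Subdiv G m).Walk (Sum.inl w₁) (threadVert G m w₁ w₂ hw x), p.length = x := by
  induction x with
  | zero =>
    have : threadVert G m w₁ w₂ hw 0 = Sum.inl w₁ := by simp [threadVert]
    rw [this]
    exact ⟨.nil, rfl⟩
  | succ x ih =>
    obtain ⟨p, hp⟩ := ih (by omega)
    exact ⟨p.concat (thread_adj_s10 G hm w₁ w₂ hw x (by omega)), by simp [hp]⟩

lemma lift_walk {n m : ℕ} (G : SimpleGraph (Fin n)) (hm : 2 ≤ m) {u v : Fin n} (p : G.Walk u v) :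
    ∃ q : (Subdiv G m).Walk (Sum.inl u) (Sum.inl v), q.length = m * p.length := by
  induction p with
  | nil => exact ⟨.nil, rfl⟩
  | @cons u v w h p ih =>
    obtain ⟨q, hq⟩ := ih
    have := thread_walk_s10 G hm u v h m le_rfl
    have e : threadVert G m u v h m = Sum.inl v := by
      simp only [threadVert]; split_ifs <;> first | omega | rfl
    rw [e] at this
    obtain ⟨r, hr⟩ := this
    exact ⟨r.append q, by simp [hq, hr]; ring⟩

lemma thread_le {n m : ℕ} (G : SimpleGraph (Fin n)) (hG : G.Connected) (hm : 2 ≤ m)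
    (b w₁ w₂ : Fin n) (hw : G.Adj w₁ w₂) (x : ℕ) (hx : x ≤ m) :
    ∃ p : (Subdiv G m).Walk (Sum.inl b) (threadVert G m w₁ w₂ hw x),
      p.length = m * G.dist b w₁ + x := by
  obtain ⟨p, hp⟩ := hG.exists_walk_length_eq_dist b w₁
  obtain ⟨q, hq⟩ := lift_walk (m := m) G hm p
  obtain ⟨r, hr⟩ := thread_walk_s10 G hm w₁ w₂ hw x hx
  exact ⟨q.append r, by simp [hq, hr, hp]⟩

lemma subF_thread {n m : ℕ} (G : SimpleGraph (Fin n)) (hG : G.Connected)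
    (b w₁ w₂ : Fin n) (hw : G.Adj w₁ w₂) (x : ℕ) (hx : x ≤ m) :
    subF G m b (threadVert G m w₁ w₂ hw x) =
      min (m * G.dist b w₁ + x) (m * G.dist b w₂ + (m - x)) := by
  have h1 := mul_dist_le G hG m b _ _ hw
  have h2 := mul_dist_le G hG m b _ _ hw.symm
  simp only [threadVert]
  split_ifs <;> simp only [subF] <;> omega

/-- For a branch vertex `b` and the vertex `v` at distance `x` (`0 ≤ x ≤ m`)
from `w₁` along the thread of the edge `{w₁, w₂}`,
`dist(b, v) mod m ∈ { x mod m, (m − x) mod m }`. -/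
theorem subdiv_dist_mod_mem {n m : ℕ} (G : SimpleGraph (Fin n))
    (hG : G.Connected) (hm : 2 ≤ m) (b w₁ w₂ : Fin n) (hw : G.Adj w₁ w₂)
    (x : ℕ) (hx : x ≤ m) :
    (Subdiv G m).dist (Sum.inl b) (threadVert G m w₁ w₂ hw x) % m = x % m ∨
    (Subdiv G m).dist (Sum.inl b) (threadVert G m w₁ w₂ hw x) % m = (m - x) % m := by
  have hF := subF_thread G hG b w₁ w₂ hw x hx
  obtain ⟨p, hp⟩ := thread_le G hG hm b w₁ w₂ hw x hx
  have h2 := thread_le G hG hm b w₂ w₁ hw.symm (m - x) (by omega)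
  rw [← thread_symm_s10 G hm w₁ w₂ hw x hx] at h2
  obtain ⟨q, hq⟩ := h2
  have hp' := SimpleGraph.dist_le p
  have hq' := SimpleGraph.dist_le q
  obtain ⟨r, hr⟩ := p.reachable.exists_walk_length_eq_dist
  have hl := subF_walk G hG hm b r
  have h0 : subF G m b (Sum.inl b) = 0 := by simp [subF]
  rw [hF, h0, hr] at hl
  rw [hp] at hp'
  rw [hq] at hq'
  have : (Subdiv G m).dist (Sum.inl b) (threadVert G m w₁ w₂ hw x) = m * G.dist b w₁ + x ∨
      (Subdiv G m).dist (Sum.inl b) (threadVert G m w₁ w₂ hw x) =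
        m * G.dist b w₂ + (m - x) := by omega
  rcases this with h | h
  · left; rw [h, Nat.mul_add_mod]
  · right; rw [h, Nat.mul_add_mod]
end

section
/- Let G be a finite simple connected graph, m ≥ 2 an integer, and let {w1, w2} and {a, b} be two distinct edges of G. Let v be the vertex on the thread of G^{1/m} replacing {w1, w2} at distance j from w1^{1/m} with 0 < j < m, and let p be the vertex on the thread replacing {a, b} at distance y from a^{1/m} with 0 < y < m. Then dist_{G^{1/m}}(v, p) = min( j + y + m·dist_G(w1, a), j + (m − y) + m·dist_G(w1, b), (m − j) + y + m·dist_G(w2, a), (m − j) + (m − y) + m·dist_G(w2, b) ). -/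
open SimpleGraph

theorem threadVert_swap {n m : ℕ} (G : SimpleGraph (Fin n)) (w₁ w₂ : Fin n)
    (h : G.Adj w₁ w₂) (x : ℕ) (hx0 : 0 < x) (hxm : x < m) :
    threadVert G m w₁ w₂ h x = threadVert G m w₂ w₁ h.symm (m - x) := by
  have hne := h.ne
  unfold threadVert
  rw [dif_neg (show ¬ x = 0 by omega), dif_neg (show ¬ m ≤ x by omega),
    dif_neg (show ¬ m - x = 0 by omega), dif_neg (show ¬ m ≤ m - x by omega)]
  rcases lt_or_gt_of_ne hne with hlt | hlt
  · rw [dif_pos hlt, dif_neg (not_lt.mpr hlt.le)]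
    congr 3
    omega
  · rw [dif_neg (not_lt.mpr hlt.le), dif_pos hlt]

theorem threadVert_adj {n m : ℕ} (G : SimpleGraph (Fin n)) (hm : 2 ≤ m) (w₁ w₂ : Fin n)
    (h : G.Adj w₁ w₂) (hlt : w₁ < w₂) (x : ℕ) (hxm : x < m) :
    (Subdiv G m).Adj (threadVert G m w₁ w₂ h x) (threadVert G m w₁ w₂ h (x + 1)) := by
  unfold threadVert Subdiv
  rw [SimpleGraph.fromRel_adj]
  by_cases h0 : x = 0
  · subst h0
    rw [dif_pos rfl, dif_neg (by omega), dif_neg (by omega), dif_pos hlt]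
    exact ⟨by simp, Or.inl (Or.inl ⟨rfl, rfl⟩)⟩
  · rw [dif_neg h0, dif_neg (by omega), dif_pos hlt, dif_neg (by omega)]
    by_cases h1 : m ≤ x + 1
    · rw [dif_pos h1]
      exact ⟨by simp, Or.inr (Or.inr ⟨rfl, by simp only []; omega⟩)⟩
    · rw [dif_neg h1, dif_pos hlt]
      refine ⟨?_, Or.inl ⟨rfl, by simp only []; omega⟩⟩
      intro hc
      simp only [Sum.inr.injEq, Prod.mk.injEq, Fin.mk.injEq] at hc
      omega

theorem threadVert_walk {n m : ℕ} (G : SimpleGraph (Fin n)) (hm : 2 ≤ m) (w₁ w₂ : Fin n)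
    (h : G.Adj w₁ w₂) (hlt : w₁ < w₂) (x k : ℕ) (hxm : x + k ≤ m) :
    ∃ p : (Subdiv G m).Walk (threadVert G m w₁ w₂ h x) (threadVert G m w₁ w₂ h (x + k)),
      p.length = k := by
  induction k with
  | zero => exact ⟨Walk.nil, rfl⟩
  | succ k ih =>
    obtain ⟨p, hp⟩ := ih (by omega)
    exact ⟨p.concat (threadVert_adj G hm w₁ w₂ h hlt (x + k) (by omega)), by
      rw [Walk.length_concat, hp]⟩

theorem threadVert_zero {n m : ℕ} (G : SimpleGraph (Fin n)) (w₁ w₂ : Fin n)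
    (h : G.Adj w₁ w₂) : threadVert G m w₁ w₂ h 0 = Sum.inl w₁ := by
  simp [threadVert]

theorem threadVert_last {n m : ℕ} (G : SimpleGraph (Fin n)) (hm : 2 ≤ m) (w₁ w₂ : Fin n)
    (h : G.Adj w₁ w₂) : threadVert G m w₁ w₂ h m = Sum.inl w₂ := by
  unfold threadVert
  rw [dif_neg (by omega), dif_pos le_rfl]

theorem walk_left {n m : ℕ} (G : SimpleGraph (Fin n)) (hm : 2 ≤ m) (w₁ w₂ : Fin n)
    (h : G.Adj w₁ w₂) (hlt : w₁ < w₂) (x : ℕ) (hxm : x ≤ m) :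
    ∃ p : (Subdiv G m).Walk (Sum.inl w₁) (threadVert G m w₁ w₂ h x), p.length = x := by
  have := threadVert_walk G hm w₁ w₂ h hlt 0 x (by omega)
  rwa [threadVert_zero, Nat.zero_add] at this

theorem walk_right {n m : ℕ} (G : SimpleGraph (Fin n)) (hm : 2 ≤ m) (w₁ w₂ : Fin n)
    (h : G.Adj w₁ w₂) (hlt : w₁ < w₂) (x : ℕ) (hxm : x ≤ m) :
    ∃ p : (Subdiv G m).Walk (Sum.inl w₂) (threadVert G m w₁ w₂ h x), p.length = m - x := by
  have := threadVert_walk G hm w₁ w₂ h hlt x (m - x) (by omega)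
  rw [Nat.add_sub_cancel' hxm, threadVert_last G hm] at this
  obtain ⟨p, hp⟩ := this
  exact ⟨p.reverse, by rw [Walk.length_reverse, hp]⟩

theorem walk_edge {n m : ℕ} (G : SimpleGraph (Fin n)) (hm : 2 ≤ m) (w₁ w₂ : Fin n)
    (h : G.Adj w₁ w₂) :
    ∃ p : (Subdiv G m).Walk (Sum.inl w₁) (Sum.inl w₂), p.length = m := by
  rcases lt_or_gt_of_ne h.ne with hlt | hlt
  · have := walk_left G hm w₁ w₂ h hlt m le_rfl
    rwa [threadVert_last G hm] at this
  · have := walk_left G hm w₂ w₁ h.symm hlt m le_rfl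
    rw [threadVert_last G hm] at this
    obtain ⟨p, hp⟩ := this
    exact ⟨p.reverse, by rw [Walk.length_reverse, hp]⟩

theorem walk_branch {n m : ℕ} (G : SimpleGraph (Fin n)) (hm : 2 ≤ m) {u v : Fin n}
    (q : G.Walk u v) :
    ∃ p : (Subdiv G m).Walk (Sum.inl u) (Sum.inl v), p.length = m * q.length := by
  induction q with
  | nil => exact ⟨Walk.nil, by simp⟩
  | cons h q ih =>
    obtain ⟨p, hp⟩ := ih
    obtain ⟨r, hr⟩ := walk_edge G hm _ _ h
    exact ⟨r.append p, by rw [Walk.length_append, Walk.length_cons, hp, hr]; ring⟩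

theorem walk_route {n m : ℕ} (G : SimpleGraph (Fin n)) (hG : G.Connected) (hm : 2 ≤ m)
    {u v : Fin n} {s t : SubVert (Fin n) G m} {k l : ℕ}
    (h₁ : ∃ p : (Subdiv G m).Walk (Sum.inl u) s, p.length = k)
    (h₂ : ∃ p : (Subdiv G m).Walk (Sum.inl v) t, p.length = l) :
    ∃ p : (Subdiv G m).Walk s t, p.length = k + l + m * G.dist u v := by
  obtain ⟨q, hq⟩ := hG.exists_walk_length_eq_dist u v
  obtain ⟨r, hr⟩ := walk_branch G hm q
  obtain ⟨p₁, hp₁⟩ := h₁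
  obtain ⟨p₂, hp₂⟩ := h₂
  exact ⟨p₁.reverse.append (r.append p₂), by
    rw [Walk.length_append, Walk.length_append, Walk.length_reverse, hp₁, hp₂, hr, hq]; ring⟩

/-- Distance from the thread vertex to a branch vertex. -/
noncomputable def potBranch {n : ℕ} (m : ℕ) (G : SimpleGraph (Fin n)) (w₁ w₂ : Fin n) (j : ℕ)
    (u : Fin n) : ℕ := min (j + m * G.dist w₁ u) (m - j + m * G.dist w₂ u)

/-- Distance from the thread vertex to any vertex. -/
noncomputable def pot {n : ℕ} (m : ℕ) (G : SimpleGraph (Fin n)) (w₁ w₂ : Fin n) (j : ℕ) :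
    SubVert (Fin n) G m → ℕ
  | Sum.inl u => potBranch m G w₁ w₂ j u
  | Sum.inr ei =>
    if ei.1.1 = (w₁, w₂) then max ((ei.2 : ℕ) + 1 - j) (j - ((ei.2 : ℕ) + 1))
    else min ((ei.2 : ℕ) + 1 + potBranch m G w₁ w₂ j ei.1.1.1)
      (m - ((ei.2 : ℕ) + 1) + potBranch m G w₁ w₂ j ei.1.1.2)

theorem potBranch_adj {n m : ℕ} (G : SimpleGraph (Fin n)) (hG : G.Connected) (w₁ w₂ : Fin n)
    (j : ℕ) {u v : Fin n} (h : G.Adj u v) :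
    potBranch m G w₁ w₂ j u ≤ potBranch m G w₁ w₂ j v + m := by
  have key : ∀ w, m * G.dist w u ≤ m * G.dist w v + m := by
    intro w
    have h1 := hG.dist_triangle (u := w) (v := v) (w := u)
    rw [SimpleGraph.dist_eq_one_iff_adj.mpr h.symm] at h1
    calc m * G.dist w u ≤ m * (G.dist w v + 1) := Nat.mul_le_mul_left _ h1
      _ = _ := by ring
  have := key w₁
  have := key w₂
  unfold potBranch
  omega

theorem pot_pre {n m : ℕ} (G : SimpleGraph (Fin n)) (hG : G.Connected) (hm : 2 ≤ m)
    (w₁ w₂ : Fin n) (hw : G.Adj w₁ w₂) (j : ℕ) (hjm : j < m)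
    (s t : SubVert (Fin n) G m) (h : subPre G m s t) :
    pot m G w₁ w₂ j s ≤ pot m G w₁ w₂ j t + 1 ∧ pot m G w₁ w₂ j t ≤ pot m G w₁ w₂ j s + 1 := by
  rcases s with u | ⟨⟨⟨c, d⟩, he, hlt⟩, i⟩ <;> rcases t with v | ⟨⟨⟨c₂, d₂⟩, he₂, hlt₂⟩, i₂⟩
  · have := h.1
    omega
  · have hi := i₂.2
    have e1 := potBranch_adj (m := m) G hG w₁ w₂ j he₂
    have e2 := potBranch_adj (m := m) G hG w₁ w₂ j he₂.symm
    have d1 : potBranch m G w₁ w₂ j w₁ = j := by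
      simp [potBranch, SimpleGraph.dist_eq_one_iff_adj.mpr hw.symm]; omega
    have d2 : potBranch m G w₁ w₂ j w₂ = m - j := by
      simp [potBranch, SimpleGraph.dist_eq_one_iff_adj.mpr hw]; omega
    simp only [subPre] at h
    simp only [pot, Prod.mk.injEq]
    simp only at e1 e2
    split_ifs with hc
    · obtain ⟨rfl, rfl⟩ := hc
      rcases h with ⟨rfl, h⟩ | ⟨rfl, h⟩ <;> omega
    · rcases h with ⟨rfl, h⟩ | ⟨rfl, h⟩ <;> omega
  · exact h.elim
  · have hi := i₂.2
    simp only [subPre, Subtype.mk.injEq, Prod.mk.injEq] at h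
    obtain ⟨⟨rfl, rfl⟩, h⟩ := h
    simp only [pot, Prod.mk.injEq]
    split_ifs with hc <;> omega

theorem pot_walk {n m : ℕ} (G : SimpleGraph (Fin n)) (hG : G.Connected) (hm : 2 ≤ m)
    (w₁ w₂ : Fin n) (hw : G.Adj w₁ w₂) (j : ℕ) (hjm : j < m)
    {s t : SubVert (Fin n) G m} (p : (Subdiv G m).Walk s t) :
    pot m G w₁ w₂ j t ≤ pot m G w₁ w₂ j s + p.length := by
  induction p with
  | nil => simp
  | cons h q ih =>
    rw [Walk.length_cons]
    unfold Subdiv at h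
    rw [SimpleGraph.fromRel_adj] at h
    rcases h.2 with h | h
    · have := (pot_pre G hG hm w₁ w₂ hw j hjm _ _ h).2
      omega
    · have := (pot_pre G hG hm w₁ w₂ hw j hjm _ _ h).1
      omega

theorem dist_thread_thread_lt {n m : ℕ} (G : SimpleGraph (Fin n))
    (hG : G.Connected) (hm : 2 ≤ m) (w₁ w₂ a b : Fin n)
    (hw : G.Adj w₁ w₂) (hab : G.Adj a b) (hne : s(w₁, w₂) ≠ s(a, b))
    (hwl : w₁ < w₂) (habl : a < b)
    (j y : ℕ) (hj0 : 0 < j) (hjm : j < m) (hy0 : 0 < y) (hym : y < m) :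
    (Subdiv G m).dist (threadVert G m w₁ w₂ hw j) (threadVert G m a b hab y) =
      min (min (j + y + m * G.dist w₁ a) (j + (m - y) + m * G.dist w₁ b))
          (min ((m - j) + y + m * G.dist w₂ a) ((m - j) + (m - y) + m * G.dist w₂ b)) := by
  have l1 := walk_left G hm w₁ w₂ hw hwl j hjm.le
  have l2 := walk_right G hm w₁ w₂ hw hwl j hjm.le
  have r1 := walk_left G hm a b hab habl y hym.le
  have r2 := walk_right G hm a b hab habl y hym.le
  obtain ⟨p1, hp1⟩ := walk_route G hG hm l1 r1
  obtain ⟨p2, hp2⟩ := walk_route G hG hm l1 r2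
  obtain ⟨p3, hp3⟩ := walk_route G hG hm l2 r1
  obtain ⟨p4, hp4⟩ := walk_route G hG hm l2 r2
  have b1 := dist_le p1
  have b2 := dist_le p2
  have b3 := dist_le p3
  have b4 := dist_le p4
  obtain ⟨q, hq⟩ := p1.reachable.exists_walk_length_eq_dist
  have low := pot_walk G hG hm w₁ w₂ hw j hjm q
  rw [hq] at low
  have f0 : pot m G w₁ w₂ j (threadVert G m w₁ w₂ hw j) = 0 := by
    unfold threadVert
    rw [dif_neg (by omega), dif_neg (by omega), dif_pos hwl]
    simp only [pot, if_true]
    omega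
  have f1 : pot m G w₁ w₂ j (threadVert G m a b hab y) =
      min (y + potBranch m G w₁ w₂ j a) (m - y + potBranch m G w₁ w₂ j b) := by
    unfold threadVert
    rw [dif_neg (by omega), dif_neg (by omega), dif_pos habl]
    have hc : ¬ ((a, b) = (w₁, w₂)) := by
      rintro hc
      rw [Prod.mk.injEq] at hc
      exact hne (by rw [hc.1, hc.2])
    simp only [pot, if_neg hc, Nat.sub_add_cancel (Nat.succ_le_of_lt hy0)]
  rw [f0, f1] at low
  unfold potBranch at low
  omega

/-- Distance between internal vertices of two distinct threads: for `v` at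
distance `j` from `w₁` on the thread of `{w₁, w₂}` and `p` at distance `y`
from `a` on the thread of `{a, b}` (with `0 < j < m`, `0 < y < m`),
`dist(v, p)` is the minimum of the four branch-to-branch routes. -/
theorem subdiv_dist_thread_thread {n m : ℕ} (G : SimpleGraph (Fin n))
    (hG : G.Connected) (hm : 2 ≤ m) (w₁ w₂ a b : Fin n)
    (hw : G.Adj w₁ w₂) (hab : G.Adj a b) (hne : s(w₁, w₂) ≠ s(a, b))
    (j y : ℕ) (hj0 : 0 < j) (hjm : j < m) (hy0 : 0 < y) (hym : y < m) :
    (Subdiv G m).dist (threadVert G m w₁ w₂ hw j) (threadVert G m a b hab y) =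
      min (min (j + y + m * G.dist w₁ a) (j + (m - y) + m * G.dist w₁ b))
          (min ((m - j) + y + m * G.dist w₂ a) ((m - j) + (m - y) + m * G.dist w₂ b)) := by
  rcases lt_or_gt_of_ne hw.ne with h1 | h1 <;> rcases lt_or_gt_of_ne hab.ne with h2 | h2
  · exact dist_thread_thread_lt G hG hm _ _ _ _ hw hab hne h1 h2 j y hj0 hjm hy0 hym
  · rw [threadVert_swap G a b hab y hy0 hym,
      dist_thread_thread_lt G hG hm _ _ _ _ hw hab.symm (by rwa [Sym2.eq_swap (a := b)]) h1 h2
        j (m - y) hj0 hjm (by omega) (by omega)]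
    omega
  · rw [threadVert_swap G w₁ w₂ hw j hj0 hjm,
      dist_thread_thread_lt G hG hm _ _ _ _ hw.symm hab (by rwa [Sym2.eq_swap (a := w₂)]) h1 h2
        (m - j) y (by omega) (by omega) hy0 hym]
    omega
  · rw [threadVert_swap G w₁ w₂ hw j hj0 hjm, threadVert_swap G a b hab y hy0 hym,
      dist_thread_thread_lt G hG hm _ _ _ _ hw.symm hab.symm
        (by rwa [Sym2.eq_swap (a := w₂), Sym2.eq_swap (a := b)]) h1 h2
        (m - j) (m - y) (by omega) (by omega) (by omega) (by omega)]
    omega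
end
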